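/- arXiv:1001.0699 — 8 statements merged into one kernel-verified Lean document; each statement's English description precedes it below -/
import Mathlib

section
/- Let e, n, ξ, κ, τ, σ be a spacelike frame system of type {space, time, space} along an interval I, β the striction curve with β' = cos σ · e + sin σ · ξ, and φ(u,v) = β(u) + v·e(u), so that φ_u(u,v) = β'(u) + v·e'(u) and φ_v(u,v) = e(u). Then φ_u ∧ φ_v = sin σ(u) · n(u) + v κ(u) · ξ(u), and g(φ_u ∧ φ_v, φ_u ∧ φ_v) = −sin²σ(u) + v²κ(u)²; in particular the normal vector φ_u ∧ φ_v is timelike (g(φ_u ∧ φ_v, φ_u ∧ φ_v) < 0) if and only if v²κ(u)² < sin²σ(u). -/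
noncomputable section

/-- Lorentz metric on ℝ³: g(v,w) = v₁w₁ + v₂w₂ − v₃w₃. -/
def lg (v w : Fin 3 → ℝ) : ℝ := v 0 * w 0 + v 1 * w 1 - v 2 * w 2

/-- Lorentzian cross product: v ∧ w = (v₃w₂ − v₂w₃, v₁w₃ − v₃w₁, v₁w₂ − v₂w₁). -/
def lcross (v w : Fin 3 → ℝ) : Fin 3 → ℝ :=
  ![v 2 * w 1 - v 1 * w 2, v 0 * w 2 - v 2 * w 0, v 0 * w 1 - v 1 * w 0]

/-- Determinant of the 3×3 matrix with rows a, b, c. -/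
def ldet (a b c : Fin 3 → ℝ) : ℝ :=
  Matrix.det !![a 0, a 1, a 2; b 0, b 1, b 2; c 0, c 1, c 2]

/-- Normal vector of the spacelike ruled surface and its causal character. -/
theorem stmt1
    (I : Set ℝ) (hI : IsOpen I)
    (e n ξ β : ℝ → Fin 3 → ℝ) (κ τ σ : ℝ → ℝ)
    (hde : ∀ u ∈ I, DifferentiableAt ℝ e u)
    (hdn : ∀ u ∈ I, DifferentiableAt ℝ n u)
    (hdξ : ∀ u ∈ I, DifferentiableAt ℝ ξ u)
    (hdβ : ∀ u ∈ I, DifferentiableAt ℝ β u)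
    (hκ0 : ∀ u ∈ I, κ u ≠ 0)
    (hee : ∀ u ∈ I, lg (e u) (e u) = 1)
    (hnn : ∀ u ∈ I, lg (n u) (n u) = -1)
    (hξξ : ∀ u ∈ I, lg (ξ u) (ξ u) = 1)
    (hen : ∀ u ∈ I, lg (e u) (n u) = 0)
    (hnξ : ∀ u ∈ I, lg (n u) (ξ u) = 0)
    (hξe : ∀ u ∈ I, lg (ξ u) (e u) = 0)
    (hc1 : ∀ u ∈ I, lcross (e u) (n u) = -ξ u)
    (hc2 : ∀ u ∈ I, lcross (n u) (ξ u) = -e u)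
    (hc3 : ∀ u ∈ I, lcross (ξ u) (e u) = n u)
    (hfe : ∀ u ∈ I, deriv e u = κ u • n u)
    (hfn : ∀ u ∈ I, deriv n u = κ u • e u + τ u • ξ u)
    (hfξ : ∀ u ∈ I, deriv ξ u = τ u • n u)
    (hβ' : ∀ u ∈ I, deriv β u = Real.cos (σ u) • e u + Real.sin (σ u) • ξ u) :
    ∀ u ∈ I, ∀ v : ℝ,
      lcross (deriv β u + v • deriv e u) (e u)
          = Real.sin (σ u) • n u + (v * κ u) • ξ u
      ∧ lg (lcross (deriv β u + v • deriv e u) (e u))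
            (lcross (deriv β u + v • deriv e u) (e u))
          = -(Real.sin (σ u)) ^ 2 + v ^ 2 * (κ u) ^ 2
      ∧ (lg (lcross (deriv β u + v • deriv e u) (e u))
            (lcross (deriv β u + v • deriv e u) (e u)) < 0
          ↔ v ^ 2 * (κ u) ^ 2 < (Real.sin (σ u)) ^ 2) := by
  intro u hu v
  have h1 : lcross (deriv β u + v • deriv e u) (e u)
      = Real.sin (σ u) • n u + (v * κ u) • ξ u := by
    have a := hc1 u hu
    have c := hc3 u hu
    rw [hβ' u hu, hfe u hu]
    have a0 := congrFun a 0
    have a1 := congrFun a 1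
    have a2 := congrFun a 2
    have c0 := congrFun c 0
    have c1 := congrFun c 1
    have c2 := congrFun c 2
    simp [lcross] at a0 a1 a2 c0 c1 c2
    ext i
    fin_cases i <;> simp [lcross]
    · linear_combination Real.sin (σ u) * c0 - v * κ u * a0
    · linear_combination Real.sin (σ u) * c1 - v * κ u * a1
    · linear_combination Real.sin (σ u) * c2 - v * κ u * a2
  have h2 : lg (lcross (deriv β u + v • deriv e u) (e u))
      (lcross (deriv β u + v • deriv e u) (e u))
      = -(Real.sin (σ u)) ^ 2 + v ^ 2 * (κ u) ^ 2 := by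
    rw [h1]
    have a := hnn u hu
    have b := hξξ u hu
    have c := hnξ u hu
    simp only [lg, Pi.add_apply, Pi.smul_apply, smul_eq_mul] at *
    linear_combination Real.sin (σ u) ^ 2 * a + (v * κ u) ^ 2 * b
      + 2 * Real.sin (σ u) * (v * κ u) * c
  refine ⟨h1, h2, ?_⟩
  rw [h2]
  constructor <;> intro h <;> linarith
end
end

section
/- Let e, n, ξ, κ, τ, σ be a spacelike frame system of type {space, time, space} along an interval I with κ, τ, σ differentiable, β the striction curve with β' = cos σ · e + sin σ · ξ, and φ(u,v) = β(u) + v·e(u). Fix (u,v) with −sin²σ(u) + v²κ(u)² ≠ 0 and set η = (sin σ(u)·n(u) + vκ(u)·ξ(u)) / √|−sin²σ(u) + v²κ(u)²|. Then the second fundamental form coefficients satisfy: g(φ_uu, η) = (−κ cos σ sin σ − τ sin²σ − vκ' sin σ + vκσ' cos σ + v²κ²τ)/√|−sin²σ + v²κ²|, g(φ_uv, η) = −κ sin σ / √|−sin²σ + v²κ²|, and g(φ_vv, η) = 0, where φ_uu = β'' + v·e'', φ_uv = e' and φ_vv = 0, all evaluated at u. -/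
noncomputable section

/-- Second fundamental form coefficients of the spacelike ruled surface. -/
theorem stmt3
    (I : Set ℝ) (hI : IsOpen I)
    (e n ξ β : ℝ → Fin 3 → ℝ) (κ τ σ : ℝ → ℝ)
    (hde : ∀ u ∈ I, DifferentiableAt ℝ e u)
    (hdn : ∀ u ∈ I, DifferentiableAt ℝ n u)
    (hdξ : ∀ u ∈ I, DifferentiableAt ℝ ξ u)
    (hdβ : ∀ u ∈ I, DifferentiableAt ℝ β u)
    (hκ0 : ∀ u ∈ I, κ u ≠ 0)
    (hee : ∀ u ∈ I, lg (e u) (e u) = 1)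
    (hnn : ∀ u ∈ I, lg (n u) (n u) = -1)
    (hξξ : ∀ u ∈ I, lg (ξ u) (ξ u) = 1)
    (hen : ∀ u ∈ I, lg (e u) (n u) = 0)
    (hnξ : ∀ u ∈ I, lg (n u) (ξ u) = 0)
    (hξe : ∀ u ∈ I, lg (ξ u) (e u) = 0)
    (hc1 : ∀ u ∈ I, lcross (e u) (n u) = -ξ u)
    (hc2 : ∀ u ∈ I, lcross (n u) (ξ u) = -e u)
    (hc3 : ∀ u ∈ I, lcross (ξ u) (e u) = n u)
    (hfe : ∀ u ∈ I, deriv e u = κ u • n u)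
    (hfn : ∀ u ∈ I, deriv n u = κ u • e u + τ u • ξ u)
    (hfξ : ∀ u ∈ I, deriv ξ u = τ u • n u)
    (hβ' : ∀ u ∈ I, deriv β u = Real.cos (σ u) • e u + Real.sin (σ u) • ξ u)
    (hdκ : ∀ u ∈ I, DifferentiableAt ℝ κ u)
    (hdτ : ∀ u ∈ I, DifferentiableAt ℝ τ u)
    (hdσ : ∀ u ∈ I, DifferentiableAt ℝ σ u)
    (hd2e : ∀ u ∈ I, DifferentiableAt ℝ (deriv e) u)
    (hd2β : ∀ u ∈ I, DifferentiableAt ℝ (deriv β) u) :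
    ∀ u ∈ I, ∀ v : ℝ,
      -(Real.sin (σ u)) ^ 2 + v ^ 2 * (κ u) ^ 2 ≠ 0 →
      let D := Real.sqrt |(-(Real.sin (σ u)) ^ 2 + v ^ 2 * (κ u) ^ 2)|
      let η := D⁻¹ • (Real.sin (σ u) • n u + (v * κ u) • ξ u)
      lg (deriv (deriv β) u + v • deriv (deriv e) u) η
          = (-(κ u) * Real.cos (σ u) * Real.sin (σ u)
              - τ u * (Real.sin (σ u)) ^ 2
              - v * deriv κ u * Real.sin (σ u)
              + v * κ u * deriv σ u * Real.cos (σ u)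
              + v ^ 2 * (κ u) ^ 2 * τ u) / D
      ∧ lg (deriv e u) η = -(κ u * Real.sin (σ u)) / D
      ∧ lg (0 : Fin 3 → ℝ) η = 0 := by
  intro u hu v _
  have hmem : I ∈ nhds u := hI.mem_nhds hu
  have hE : HasDerivAt e (κ u • n u) u := hfe u hu ▸ (hde u hu).hasDerivAt
  have hN : HasDerivAt n (κ u • e u + τ u • ξ u) u := hfn u hu ▸ (hdn u hu).hasDerivAt
  have hX : HasDerivAt ξ (τ u • n u) u := hfξ u hu ▸ (hdξ u hu).hasDerivAt
  have hS := (hdσ u hu).hasDerivAt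
  have h1 : deriv (deriv e) u = κ u • (κ u • e u + τ u • ξ u) + deriv κ u • n u := by
    have h : deriv e =ᶠ[nhds u] fun t => κ t • n t := Filter.eventually_of_mem hmem hfe
    rw [h.deriv_eq]
    exact ((hdκ u hu).hasDerivAt.smul hN).deriv
  have h2 : deriv (deriv β) u =
      (Real.cos (σ u) • (κ u • n u) + (-Real.sin (σ u) * deriv σ u) • e u)
      + (Real.sin (σ u) • (τ u • n u) + (Real.cos (σ u) * deriv σ u) • ξ u) := by
    have h : deriv β =ᶠ[nhds u] fun t => Real.cos (σ t) • e t + Real.sin (σ t) • ξ t :=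
      Filter.eventually_of_mem hmem hβ'
    rw [h.deriv_eq]
    exact ((hS.cos.smul hE).add (hS.sin.smul hX)).deriv
  have a1 := hnn u hu
  have a2 := hξξ u hu
  have a3 := hen u hu
  have a4 := hnξ u hu
  have a5 := hξe u hu
  intro D η
  simp only [η]
  rw [h1, h2, hfe u hu]
  generalize D = d
  simp only [lg, Pi.add_apply, Pi.smul_apply, smul_eq_mul, Pi.zero_apply, div_eq_mul_inv] at *
  generalize d⁻¹ = c
  generalize Real.sin (σ u) = s at *
  generalize Real.cos (σ u) = k at *
  refine ⟨?_, ?_, by ring⟩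
  · linear_combination c * s * (k * κ u + s * τ u + v * deriv κ u) * a1
      + c * v * κ u * (k * deriv σ u + v * κ u * τ u) * a2
      + c * s * (-s * deriv σ u + v * κ u ^ 2) * a3
      + (c * v * κ u * (k * κ u + s * τ u + v * deriv κ u)
        + c * s * (k * deriv σ u + v * κ u * τ u)) * a4
      + c * v * κ u * (-s * deriv σ u + v * κ u ^ 2) * a5
  · linear_combination c * κ u * s * a1 + c * κ u * v * κ u * a4
end
end

section
/- (Example 4.1: second type helicoid.) Define φ : ℝ × ℝ → ℝ³ by φ(u,v) = (−v cosh u, u, −v sinh u). For |v| < 1, the Lorentzian normal satisfies g(φ_u ∧ φ_v, φ_u ∧ φ_v) = v² − 1 < 0 (so the surface is spacelike), and with η = (φ_u ∧ φ_v)/√|g(φ_u ∧ φ_v, φ_u ∧ φ_v)| the Gaussian curvature K = (g(φ_uu,η)·g(φ_vv,η) − g(φ_uv,η)²)/(g(φ_u,φ_u)·g(φ_v,φ_v) − g(φ_u,φ_v)²) equals −1/(1 − v²)². -/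
noncomputable section

/-- Example 4.1: the second type helicoid is spacelike with K = −1/(1 − v²)². -/
theorem stmt6 :
    ∀ u v : ℝ, |v| < 1 →
      let φ : ℝ → ℝ → Fin 3 → ℝ := fun u v => ![-v * Real.cosh u, u, -v * Real.sinh u]
      let Fu := deriv (fun x => φ x v) u
      let Fv := deriv (fun y => φ u y) v
      let Fuu := deriv (fun x => deriv (fun x' => φ x' v) x) u
      let Fuv := deriv (fun y => deriv (fun x => φ x y) u) v
      let Fvv := deriv (fun y => deriv (fun y' => φ u y') y) v
      let c := lcross Fu Fv
      let η := (Real.sqrt |lg c c|)⁻¹ • c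
      lg c c = v ^ 2 - 1
      ∧ v ^ 2 - 1 < 0
      ∧ (lg Fuu η * lg Fvv η - (lg Fuv η) ^ 2)
          / (lg Fu Fu * lg Fv Fv - (lg Fu Fv) ^ 2) = -1 / (1 - v ^ 2) ^ 2 := by
  intro u v hv
  have hv2 : v ^ 2 < 1 := by
    rw [← sq_abs]
    nlinarith [abs_nonneg v]
  have hcs := Real.cosh_sq u
  have dU : ∀ y x : ℝ, deriv (fun x => (![-y * Real.cosh x, x, -y * Real.sinh x] : Fin 3 → ℝ)) x
      = ![-y * Real.sinh x, 1, -y * Real.cosh x] := by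
    intro y x
    apply HasDerivAt.deriv
    rw [hasDerivAt_pi]
    intro i
    fin_cases i
    · exact (Real.hasDerivAt_cosh x).const_mul (-y)
    · exact hasDerivAt_id x
    · exact (Real.hasDerivAt_sinh x).const_mul (-y)
  have dV : ∀ y : ℝ, deriv (fun y => (![-y * Real.cosh u, u, -y * Real.sinh u] : Fin 3 → ℝ)) y
      = ![-1 * Real.cosh u, 0, -1 * Real.sinh u] := by
    intro y
    apply HasDerivAt.deriv
    rw [hasDerivAt_pi]
    intro i
    fin_cases i
    · exact (hasDerivAt_id y).neg.mul_const _
    · exact hasDerivAt_const y u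
    · exact (hasDerivAt_id y).neg.mul_const _
  have dUU : deriv (fun x => (![-v * Real.sinh x, 1, -v * Real.cosh x] : Fin 3 → ℝ)) u
      = ![-v * Real.cosh u, 0, -v * Real.sinh u] := by
    apply HasDerivAt.deriv
    rw [hasDerivAt_pi]
    intro i
    fin_cases i
    · exact (Real.hasDerivAt_sinh u).const_mul (-v)
    · exact hasDerivAt_const u (1 : ℝ)
    · exact (Real.hasDerivAt_cosh u).const_mul (-v)
  have dUV : deriv (fun y => (![-y * Real.sinh u, 1, -y * Real.cosh u] : Fin 3 → ℝ)) v
      = ![-1 * Real.sinh u, 0, -1 * Real.cosh u] := by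
    apply HasDerivAt.deriv
    rw [hasDerivAt_pi]
    intro i
    fin_cases i
    · exact (hasDerivAt_id v).neg.mul_const _
    · exact hasDerivAt_const v (1 : ℝ)
    · exact (hasDerivAt_id v).neg.mul_const _
  intro φ Fu Fv Fuu Fuv Fvv c η
  have hFu : Fu = ![-v * Real.sinh u, 1, -v * Real.cosh u] := dU v u
  have hFv : Fv = ![-1 * Real.cosh u, 0, -1 * Real.sinh u] := dV v
  have hFuu : Fuu = ![-v * Real.cosh u, 0, -v * Real.sinh u] := by
    simp only [Fuu, φ, dU, dUU]
  have hFuv : Fuv = ![-1 * Real.sinh u, 0, -1 * Real.cosh u] := by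
    simp only [Fuv, φ, dU, dUV]
  have hFvv : Fvv = 0 := by
    simp only [Fvv, φ, dV, deriv_const]
  have hc : c = ![Real.sinh u, -v, Real.cosh u] := by
    simp only [c, hFu, hFv, lcross]
    ext i
    fin_cases i
    · simp
    · simp
      linear_combination (-v) * hcs
    · simp
  have hcc : lg c c = v ^ 2 - 1 := by
    simp [hc, lg]
    linear_combination -hcs
  have hη : η = (Real.sqrt (1 - v ^ 2))⁻¹ • c := by
    simp only [η, hcc]
    rw [abs_of_neg (by linarith), neg_sub]
  refine ⟨hcc, by linarith, ?_⟩
  have h1 : lg Fvv η = 0 := by simp [hFvv, lg]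
  have h2 : lg Fuv η = (Real.sqrt (1 - v ^ 2))⁻¹ := by
    simp [hFuv, hη, hc, lg]
    linear_combination (Real.sqrt (1 - v ^ 2))⁻¹ * hcs
  have h3 : lg Fu Fu * lg Fv Fv - (lg Fu Fv) ^ 2 = 1 - v ^ 2 := by
    have a : lg Fu Fu = 1 - v ^ 2 := by
      simp [hFu, lg]
      linear_combination (-v ^ 2) * hcs
    have b : lg Fv Fv = 1 := by
      simp [hFv, lg]
      linear_combination hcs
    have d : lg Fu Fv = 0 := by
      simp [hFu, hFv, lg]
      ring
    rw [a, b, d]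
    ring
  have hpos : (0 : ℝ) < 1 - v ^ 2 := by linarith
  rw [h1, h2, h3, inv_pow, Real.sq_sqrt hpos.le]
  field_simp
  ring
end
end

section
/- Let e, n, ξ, κ, τ, σ be a frame system of type {time, space, space} along an interval I, and let β be the striction curve with β' = sinh σ · e + cosh σ · ξ. Then for every u ∈ I the distribution parameter of the timelike non-cylindrical ruled surface φ(u,v) = β(u) + v·e(u), namely P(u) = det(β'(u), e(u), e'(u)) / g(e'(u), e'(u)), equals cosh σ(u) / κ(u). -/
noncomputable section

/-- Distribution parameter of the timelike ruled surface M₂: P = cosh σ / κ. -/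
theorem stmt7
    (I : Set ℝ) (hI : IsOpen I)
    (e n ξ β : ℝ → Fin 3 → ℝ) (κ τ σ : ℝ → ℝ)
    (hde : ∀ u ∈ I, DifferentiableAt ℝ e u)
    (hdn : ∀ u ∈ I, DifferentiableAt ℝ n u)
    (hdξ : ∀ u ∈ I, DifferentiableAt ℝ ξ u)
    (hdβ : ∀ u ∈ I, DifferentiableAt ℝ β u)
    (hκ0 : ∀ u ∈ I, κ u ≠ 0)
    (hee : ∀ u ∈ I, lg (e u) (e u) = -1)
    (hnn : ∀ u ∈ I, lg (n u) (n u) = 1)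
    (hξξ : ∀ u ∈ I, lg (ξ u) (ξ u) = 1)
    (hen : ∀ u ∈ I, lg (e u) (n u) = 0)
    (hnξ : ∀ u ∈ I, lg (n u) (ξ u) = 0)
    (hξe : ∀ u ∈ I, lg (ξ u) (e u) = 0)
    (hc1 : ∀ u ∈ I, lcross (e u) (n u) = -ξ u)
    (hc2 : ∀ u ∈ I, lcross (n u) (ξ u) = e u)
    (hc3 : ∀ u ∈ I, lcross (ξ u) (e u) = -n u)
    (hfe : ∀ u ∈ I, deriv e u = κ u • n u)
    (hfn : ∀ u ∈ I, deriv n u = κ u • e u - τ u • ξ u)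
    (hfξ : ∀ u ∈ I, deriv ξ u = τ u • n u)
    (hβ' : ∀ u ∈ I, deriv β u = Real.sinh (σ u) • e u + Real.cosh (σ u) • ξ u) :
    ∀ u ∈ I,
      ldet (deriv β u) (e u) (deriv e u) / lg (deriv e u) (deriv e u)
        = Real.cosh (σ u) / κ u := by
  intro u hu
  have h0 := congrFun (hc1 u hu) 0
  have h1 := congrFun (hc1 u hu) 1
  have h2 := congrFun (hc1 u hu) 2
  have hx := hξξ u hu
  have hn := hnn u hu
  have hk := hκ0 u hu
  simp [lcross] at h0 h1 h2
  simp only [lg] at hx hn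
  have hg : lg (deriv e u) (deriv e u) = κ u ^ 2 := by
    rw [hfe u hu]
    simp only [lg, Pi.smul_apply, smul_eq_mul]
    linear_combination κ u ^ 2 * hn
  have hd : ldet (deriv β u) (e u) (deriv e u) = Real.cosh (σ u) * κ u := by
    rw [hfe u hu, hβ' u hu]
    simp only [ldet, Matrix.det_fin_three]
    simp
    linear_combination Real.cosh (σ u) * κ u * (hx - ξ u 0 * h0 - ξ u 1 * h1 + ξ u 2 * h2)
  rw [hg, hd]
  field_simp
end
end

section
/- Let e, n, ξ, κ, τ, σ be a frame system of type {time, space, space} along an interval I, β the striction curve with β' = sinh σ · e + cosh σ · ξ, and φ(u,v) = β(u) + v·e(u), so that φ_u = sinh σ · e + cosh σ · ξ + vκ · n and φ_v = e. Then the coefficients of the first fundamental form satisfy E = g(φ_u, φ_u) = 1 + v²κ(u)², F = g(φ_u, φ_v) = −sinh σ(u), and G = g(φ_v, φ_v) = −1. -/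
noncomputable section

/-- First fundamental form coefficients of the timelike ruled surface M₂. -/
theorem stmt8
    (I : Set ℝ) (hI : IsOpen I)
    (e n ξ β : ℝ → Fin 3 → ℝ) (κ τ σ : ℝ → ℝ)
    (hde : ∀ u ∈ I, DifferentiableAt ℝ e u)
    (hdn : ∀ u ∈ I, DifferentiableAt ℝ n u)
    (hdξ : ∀ u ∈ I, DifferentiableAt ℝ ξ u)
    (hdβ : ∀ u ∈ I, DifferentiableAt ℝ β u)
    (hκ0 : ∀ u ∈ I, κ u ≠ 0)
    (hee : ∀ u ∈ I, lg (e u) (e u) = -1)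
    (hnn : ∀ u ∈ I, lg (n u) (n u) = 1)
    (hξξ : ∀ u ∈ I, lg (ξ u) (ξ u) = 1)
    (hen : ∀ u ∈ I, lg (e u) (n u) = 0)
    (hnξ : ∀ u ∈ I, lg (n u) (ξ u) = 0)
    (hξe : ∀ u ∈ I, lg (ξ u) (e u) = 0)
    (hc1 : ∀ u ∈ I, lcross (e u) (n u) = -ξ u)
    (hc2 : ∀ u ∈ I, lcross (n u) (ξ u) = e u)
    (hc3 : ∀ u ∈ I, lcross (ξ u) (e u) = -n u)
    (hfe : ∀ u ∈ I, deriv e u = κ u • n u)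
    (hfn : ∀ u ∈ I, deriv n u = κ u • e u - τ u • ξ u)
    (hfξ : ∀ u ∈ I, deriv ξ u = τ u • n u)
    (hβ' : ∀ u ∈ I, deriv β u = Real.sinh (σ u) • e u + Real.cosh (σ u) • ξ u) :
    ∀ u ∈ I, ∀ v : ℝ,
      lg (deriv β u + v • deriv e u) (deriv β u + v • deriv e u)
          = 1 + v ^ 2 * (κ u) ^ 2
      ∧ lg (deriv β u + v • deriv e u) (e u) = -Real.sinh (σ u)
      ∧ lg (e u) (e u) = -1 := by
  intro u hu v
  have h1 := hee u hu
  have h2 := hnn u hu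
  have h3 := hξξ u hu
  have h4 := hen u hu
  have h5 := hnξ u hu
  have h6 := hξe u hu
  have h7 := Real.cosh_sq (σ u)
  rw [hβ' u hu, hfe u hu]
  refine ⟨?_, ?_, h1⟩
  · simp only [lg, Pi.add_apply, Pi.smul_apply, smul_eq_mul] at *
    linear_combination (Real.sinh (σ u)) ^ 2 * h1 + (v * κ u) ^ 2 * h2
      + (Real.cosh (σ u)) ^ 2 * h3 + 2 * Real.sinh (σ u) * (v * κ u) * h4
      + 2 * Real.cosh (σ u) * (v * κ u) * h5
      + 2 * Real.sinh (σ u) * Real.cosh (σ u) * h6 + h7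
  · simp only [lg, Pi.add_apply, Pi.smul_apply, smul_eq_mul] at *
    linear_combination Real.sinh (σ u) * h1 + Real.cosh (σ u) * h6 + v * κ u * h4
end
end

section
/- (Lorentzian Lamarle formula for timelike ruled surfaces with spacelike base curve and timelike ruling, Theorem 5.1.) Let e, n, ξ, κ, τ, σ be a frame system of type {time, space, space} along an interval I with κ, τ, σ differentiable, β the striction curve with β' = sinh σ · e + cosh σ · ξ, and φ(u,v) = β(u) + v·e(u). Let η = (φ_u ∧ φ_v)/‖φ_u ∧ φ_v‖ be the unit normal. Then the Gaussian curvature K = (g(φ_uu,η)·g(φ_vv,η) − g(φ_uv,η)²) / (g(φ_u,φ_u)·g(φ_v,φ_v) − g(φ_u,φ_v)²) satisfies K = κ(u)² cosh²σ(u)/(cosh²σ(u) + v²κ(u)²)²; equivalently, with distribution parameter P = cosh σ(u)/κ(u), K = P²/(P² + v²)². -/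
noncomputable section

/-- Lorentzian Lamarle formula for M₂ (Theorem 5.1):
K = κ² cosh²σ /(cosh²σ + v²κ²)² = P²/(P² + v²)² with P = cosh σ / κ. -/
theorem stmt10
    (I : Set ℝ) (hI : IsOpen I)
    (e n ξ β : ℝ → Fin 3 → ℝ) (κ τ σ : ℝ → ℝ)
    (hde : ∀ u ∈ I, DifferentiableAt ℝ e u)
    (hdn : ∀ u ∈ I, DifferentiableAt ℝ n u)
    (hdξ : ∀ u ∈ I, DifferentiableAt ℝ ξ u)
    (hdβ : ∀ u ∈ I, DifferentiableAt ℝ β u)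
    (hκ0 : ∀ u ∈ I, κ u ≠ 0)
    (hee : ∀ u ∈ I, lg (e u) (e u) = -1)
    (hnn : ∀ u ∈ I, lg (n u) (n u) = 1)
    (hξξ : ∀ u ∈ I, lg (ξ u) (ξ u) = 1)
    (hen : ∀ u ∈ I, lg (e u) (n u) = 0)
    (hnξ : ∀ u ∈ I, lg (n u) (ξ u) = 0)
    (hξe : ∀ u ∈ I, lg (ξ u) (e u) = 0)
    (hc1 : ∀ u ∈ I, lcross (e u) (n u) = -ξ u)
    (hc2 : ∀ u ∈ I, lcross (n u) (ξ u) = e u)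
    (hc3 : ∀ u ∈ I, lcross (ξ u) (e u) = -n u)
    (hfe : ∀ u ∈ I, deriv e u = κ u • n u)
    (hfn : ∀ u ∈ I, deriv n u = κ u • e u - τ u • ξ u)
    (hfξ : ∀ u ∈ I, deriv ξ u = τ u • n u)
    (hβ' : ∀ u ∈ I, deriv β u = Real.sinh (σ u) • e u + Real.cosh (σ u) • ξ u)
    (hdκ : ∀ u ∈ I, DifferentiableAt ℝ κ u)
    (hdτ : ∀ u ∈ I, DifferentiableAt ℝ τ u)
    (hdσ : ∀ u ∈ I, DifferentiableAt ℝ σ u)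
    (hd2e : ∀ u ∈ I, DifferentiableAt ℝ (deriv e) u)
    (hd2β : ∀ u ∈ I, DifferentiableAt ℝ (deriv β) u) :
    ∀ u ∈ I, ∀ v : ℝ,
      let φu := deriv β u + v • deriv e u
      let φv := e u
      let φuu := deriv (deriv β) u + v • deriv (deriv e) u
      let φuv := deriv e u
      let φvv : Fin 3 → ℝ := 0
      let c := lcross φu φv
      let η := (Real.sqrt |lg c c|)⁻¹ • c
      let K := (lg φuu η * lg φvv η - (lg φuv η) ^ 2)
                / (lg φu φu * lg φv φv - (lg φu φv) ^ 2)
      K = (κ u) ^ 2 * (Real.cosh (σ u)) ^ 2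
            / ((Real.cosh (σ u)) ^ 2 + v ^ 2 * (κ u) ^ 2) ^ 2
      ∧ K = (Real.cosh (σ u) / κ u) ^ 2
            / ((Real.cosh (σ u) / κ u) ^ 2 + v ^ 2) ^ 2 := by
  intro u hu v φu φv φuu φuv φvv c η K
  have hκ := hκ0 u hu
  have hC := Real.cosh_pos (σ u)
  have h1 := hee u hu
  have h2 := hnn u hu
  have h3 := hξξ u hu
  have h4 := hen u hu
  have h5 := hnξ u hu
  have h6 := hξe u hu
  have hφu : φu = Real.sinh (σ u) • e u + Real.cosh (σ u) • ξ u + v • (κ u • n u) := by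
    simp only [φu, hβ' u hu, hfe u hu]
  have hc : c = (v * κ u) • ξ u - Real.cosh (σ u) • n u := by
    have a := hc1 u hu
    have b := hc3 u hu
    have hx : c = Real.cosh (σ u) • lcross (ξ u) (e u)
        - (v * κ u) • lcross (e u) (n u) := by
      simp only [c, φv, hφu]
      ext i
      fin_cases i <;> simp [lcross] <;> ring
    rw [hx, a, b]
    ext i
    simp
    ring
  have hD : 0 < Real.cosh (σ u) ^ 2 + v ^ 2 * κ u ^ 2 := by positivity
  have hcc : lg c c = Real.cosh (σ u) ^ 2 + v ^ 2 * κ u ^ 2 := by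
    rw [hc]
    simp only [lg, Pi.sub_apply, Pi.smul_apply, smul_eq_mul] at *
    linear_combination (v * κ u) ^ 2 * h3 + Real.cosh (σ u) ^ 2 * h2
      - 2 * v * κ u * Real.cosh (σ u) * h5
  have hM : lg φuv η = -(κ u * Real.cosh (σ u))
      * (Real.sqrt (Real.cosh (σ u) ^ 2 + v ^ 2 * κ u ^ 2))⁻¹ := by
    simp only [η, φuv, hcc, abs_of_pos hD, hfe u hu]
    generalize (Real.sqrt (Real.cosh (σ u) ^ 2 + v ^ 2 * κ u ^ 2))⁻¹ = r
    rw [hc]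
    simp only [lg, Pi.sub_apply, Pi.smul_apply, smul_eq_mul] at h2 h5 ⊢
    linear_combination r * κ u * (v * κ u) * h5 - r * κ u * Real.cosh (σ u) * h2
  have hM2 : lg φuv η ^ 2 = (κ u * Real.cosh (σ u)) ^ 2
      / (Real.cosh (σ u) ^ 2 + v ^ 2 * κ u ^ 2) := by
    rw [hM, mul_pow, inv_pow, Real.sq_sqrt hD.le, neg_sq, div_eq_mul_inv]
  have hN : lg φvv η = 0 := by simp [lg, φvv]
  have hE : lg φu φu = -Real.sinh (σ u) ^ 2 + Real.cosh (σ u) ^ 2 + v ^ 2 * κ u ^ 2 := by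
    rw [hφu]
    simp only [lg, Pi.add_apply, Pi.smul_apply, smul_eq_mul] at h1 h2 h3 h4 h5 h6 ⊢
    linear_combination Real.sinh (σ u) ^ 2 * h1 + Real.cosh (σ u) ^ 2 * h3
      + v ^ 2 * κ u ^ 2 * h2 + 2 * Real.sinh (σ u) * Real.cosh (σ u) * h6
      + 2 * Real.sinh (σ u) * v * κ u * h4 + 2 * Real.cosh (σ u) * v * κ u * h5
  have hF : lg φu φv = -Real.sinh (σ u) := by
    rw [hφu]
    simp only [φv, lg, Pi.add_apply, Pi.smul_apply, smul_eq_mul] at h1 h4 h6 ⊢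
    linear_combination Real.sinh (σ u) * h1 + Real.cosh (σ u) * h6 + v * κ u * h4
  have hG : lg φv φv = -1 := h1
  have hK : K = κ u ^ 2 * Real.cosh (σ u) ^ 2
      / (Real.cosh (σ u) ^ 2 + v ^ 2 * κ u ^ 2) ^ 2 := by
    have hden : lg φu φu * lg φv φv - lg φu φv ^ 2
        = -(Real.cosh (σ u) ^ 2 + v ^ 2 * κ u ^ 2) := by
      rw [hE, hF, hG]; ring
    simp only [K]
    rw [hden, hN, hM2]
    have := hD.ne'
    field_simp
    ring
  refine ⟨hK, hK.trans ?_⟩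
  have hD' : 0 < (Real.cosh (σ u) / κ u) ^ 2 + v ^ 2 := by positivity
  have hDD : (Real.cosh (σ u) / κ u) ^ 2 + v ^ 2
      = (Real.cosh (σ u) ^ 2 + v ^ 2 * κ u ^ 2) / κ u ^ 2 := by
    field_simp
  rw [hDD]
  have := hD.ne'
  field_simp
end
end

section
/- Let e, n, ξ, κ, τ, σ be a frame system of type {space, space, time} along an interval I, and let β be the striction curve with β' = sinh σ · e + cosh σ · ξ. Then for every u ∈ I the distribution parameter of the timelike non-cylindrical ruled surface φ(u,v) = β(u) + v·e(u), namely P(u) = det(β'(u), e(u), e'(u)) / g(e'(u), e'(u)), equals cosh σ(u) / κ(u). -/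
noncomputable section

/-- Distribution parameter of the timelike ruled surface M₃: P = cosh σ / κ. -/
theorem stmt13
    (I : Set ℝ) (hI : IsOpen I)
    (e n ξ β : ℝ → Fin 3 → ℝ) (κ τ σ : ℝ → ℝ)
    (hde : ∀ u ∈ I, DifferentiableAt ℝ e u)
    (hdn : ∀ u ∈ I, DifferentiableAt ℝ n u)
    (hdξ : ∀ u ∈ I, DifferentiableAt ℝ ξ u)
    (hdβ : ∀ u ∈ I, DifferentiableAt ℝ β u)
    (hκ0 : ∀ u ∈ I, κ u ≠ 0)
    (hee : ∀ u ∈ I, lg (e u) (e u) = 1)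
    (hnn : ∀ u ∈ I, lg (n u) (n u) = 1)
    (hξξ : ∀ u ∈ I, lg (ξ u) (ξ u) = -1)
    (hen : ∀ u ∈ I, lg (e u) (n u) = 0)
    (hnξ : ∀ u ∈ I, lg (n u) (ξ u) = 0)
    (hξe : ∀ u ∈ I, lg (ξ u) (e u) = 0)
    (hc1 : ∀ u ∈ I, lcross (e u) (n u) = ξ u)
    (hc2 : ∀ u ∈ I, lcross (n u) (ξ u) = -e u)
    (hc3 : ∀ u ∈ I, lcross (ξ u) (e u) = -n u)
    (hfe : ∀ u ∈ I, deriv e u = κ u • n u)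
    (hfn : ∀ u ∈ I, deriv n u = (-(κ u)) • e u + τ u • ξ u)
    (hfξ : ∀ u ∈ I, deriv ξ u = τ u • n u)
    (hβ' : ∀ u ∈ I, deriv β u = Real.sinh (σ u) • e u + Real.cosh (σ u) • ξ u) :
    ∀ u ∈ I,
      ldet (deriv β u) (e u) (deriv e u) / lg (deriv e u) (deriv e u)
        = Real.cosh (σ u) / κ u := by
  intro u hu
  have h1 := hξξ u hu
  have h2 := hnn u hu
  have hk := hκ0 u hu
  have c := hc1 u hu
  have c0 := congrFun c 0
  have c1 := congrFun c 1
  have c2 := congrFun c 2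
  simp [lcross] at c0 c1 c2
  have hd : ldet (deriv β u) (e u) (deriv e u) = Real.cosh (σ u) * κ u := by
    rw [hβ' u hu, hfe u hu]
    simp only [ldet, Matrix.det_fin_three, lg] at *
    simp
    linear_combination (-Real.cosh (σ u) * κ u) * h1 - Real.cosh (σ u) * κ u * ξ u 0 * c0
      - Real.cosh (σ u) * κ u * ξ u 1 * c1 + Real.cosh (σ u) * κ u * ξ u 2 * c2
  have hg : lg (deriv e u) (deriv e u) = κ u ^ 2 := by
    rw [hfe u hu]
    simp only [lg, Pi.smul_apply, smul_eq_mul] at *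
    linear_combination κ u ^ 2 * h2
  rw [hd, hg]
  field_simp
end
end

section
/- (Lorentzian Lamarle formula for timelike ruled surfaces with timelike base curve and spacelike ruling, Theorem 6.1.) Let e, n, ξ, κ, τ, σ be a frame system of type {space, space, time} along an interval I with κ, τ, σ differentiable, β the striction curve with β' = sinh σ · e + cosh σ · ξ, and φ(u,v) = β(u) + v·e(u). Fix (u,v) with cosh²σ(u) − v²κ(u)² > 0, and let η = (φ_u ∧ φ_v)/‖φ_u ∧ φ_v‖ be the unit normal. Then the Gaussian curvature K = (g(φ_uu,η)·g(φ_vv,η) − g(φ_uv,η)²) / (g(φ_u,φ_u)·g(φ_v,φ_v) − g(φ_u,φ_v)²) satisfies K = κ(u)² cosh²σ(u)/(cosh²σ(u) − v²κ(u)²)²; equivalently, with distribution parameter P = cosh σ(u)/κ(u), K = P²/(P² − v²)². -/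
noncomputable section

/-- Lorentzian Lamarle formula for M₃ (Theorem 6.1):
K = κ² cosh²σ /(cosh²σ − v²κ²)² = P²/(P² − v²)² with P = cosh σ / κ. -/
theorem stmt16
    (I : Set ℝ) (hI : IsOpen I)
    (e n ξ β : ℝ → Fin 3 → ℝ) (κ τ σ : ℝ → ℝ)
    (hde : ∀ u ∈ I, DifferentiableAt ℝ e u)
    (hdn : ∀ u ∈ I, DifferentiableAt ℝ n u)
    (hdξ : ∀ u ∈ I, DifferentiableAt ℝ ξ u)
    (hdβ : ∀ u ∈ I, DifferentiableAt ℝ β u)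
    (hκ0 : ∀ u ∈ I, κ u ≠ 0)
    (hee : ∀ u ∈ I, lg (e u) (e u) = 1)
    (hnn : ∀ u ∈ I, lg (n u) (n u) = 1)
    (hξξ : ∀ u ∈ I, lg (ξ u) (ξ u) = -1)
    (hen : ∀ u ∈ I, lg (e u) (n u) = 0)
    (hnξ : ∀ u ∈ I, lg (n u) (ξ u) = 0)
    (hξe : ∀ u ∈ I, lg (ξ u) (e u) = 0)
    (hc1 : ∀ u ∈ I, lcross (e u) (n u) = ξ u)
    (hc2 : ∀ u ∈ I, lcross (n u) (ξ u) = -e u)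
    (hc3 : ∀ u ∈ I, lcross (ξ u) (e u) = -n u)
    (hfe : ∀ u ∈ I, deriv e u = κ u • n u)
    (hfn : ∀ u ∈ I, deriv n u = (-(κ u)) • e u + τ u • ξ u)
    (hfξ : ∀ u ∈ I, deriv ξ u = τ u • n u)
    (hβ' : ∀ u ∈ I, deriv β u = Real.sinh (σ u) • e u + Real.cosh (σ u) • ξ u)
    (hdκ : ∀ u ∈ I, DifferentiableAt ℝ κ u)
    (hdτ : ∀ u ∈ I, DifferentiableAt ℝ τ u)
    (hdσ : ∀ u ∈ I, DifferentiableAt ℝ σ u)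
    (hd2e : ∀ u ∈ I, DifferentiableAt ℝ (deriv e) u)
    (hd2β : ∀ u ∈ I, DifferentiableAt ℝ (deriv β) u) :
    ∀ u ∈ I, ∀ v : ℝ,
      (0 : ℝ) < (Real.cosh (σ u)) ^ 2 - v ^ 2 * (κ u) ^ 2 →
      let φu := deriv β u + v • deriv e u
      let φv := e u
      let φuu := deriv (deriv β) u + v • deriv (deriv e) u
      let φuv := deriv e u
      let φvv : Fin 3 → ℝ := 0
      let c := lcross φu φv
      let η := (Real.sqrt |lg c c|)⁻¹ • c
      let K := (lg φuu η * lg φvv η - (lg φuv η) ^ 2)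
                / (lg φu φu * lg φv φv - (lg φu φv) ^ 2)
      K = (κ u) ^ 2 * (Real.cosh (σ u)) ^ 2
            / ((Real.cosh (σ u)) ^ 2 - v ^ 2 * (κ u) ^ 2) ^ 2
      ∧ K = (Real.cosh (σ u) / κ u) ^ 2
            / ((Real.cosh (σ u) / κ u) ^ 2 - v ^ 2) ^ 2 := by
  intro u hu v hD φu φv φuu φuv φvv c η K
  have h1 := hee u hu
  have h2 := hnn u hu
  have h3 := hξξ u hu
  have h4 := hen u hu
  have h5 := hnξ u hu
  have h6 := hξe u hu
  have hk := hκ0 u hu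
  have hφu : φu = Real.sinh (σ u) • e u + Real.cosh (σ u) • ξ u + v • κ u • n u := by
    simp only [φu, hβ' u hu, hfe u hu]
  have hc : c = -(Real.cosh (σ u) • n u + (v * κ u) • ξ u) := by
    have a1 := hc1 u hu
    have a3 := hc3 u hu
    have e1 : c = Real.cosh (σ u) • lcross (ξ u) (e u)
        - (v * κ u) • lcross (e u) (n u) := by
      simp only [c, hφu, φv]
      ext i
      fin_cases i <;> simp [lcross] <;> ring
    rw [e1, a1, a3]
    ext i
    simp
    ring
  have hcc : lg c c = Real.cosh (σ u) ^ 2 - v ^ 2 * κ u ^ 2 := by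
    rw [hc]
    simp only [lg, Pi.neg_apply, Pi.add_apply, Pi.smul_apply, smul_eq_mul] at *
    linear_combination Real.cosh (σ u) ^ 2 * h2 + v ^ 2 * κ u ^ 2 * h3
      + 2 * Real.cosh (σ u) * v * κ u * h5
  have huvc : lg φuv c = -(κ u * Real.cosh (σ u)) := by
    simp only [φuv, hfe u hu]
    rw [hc]
    simp only [lg, Pi.neg_apply, Pi.add_apply, Pi.smul_apply, smul_eq_mul] at *
    linear_combination -κ u * Real.cosh (σ u) * h2 - κ u * v * κ u * h5
  have hη : lg φuv η = (Real.sqrt |lg c c|)⁻¹ * lg φuv c := by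
    simp only [η, lg, Pi.smul_apply, smul_eq_mul]
    ring
  have hvv : lg φvv η = 0 := by simp [φvv, lg]
  have hF : lg φu φv = Real.sinh (σ u) := by
    rw [hφu]
    simp only [φv, lg, Pi.add_apply, Pi.smul_apply, smul_eq_mul] at *
    linear_combination Real.sinh (σ u) * h1 + Real.cosh (σ u) * h6 + v * κ u * h4
  have hE : lg φu φu = Real.sinh (σ u) ^ 2 - Real.cosh (σ u) ^ 2 + v ^ 2 * κ u ^ 2 := by
    rw [hφu]
    simp only [lg, Pi.add_apply, Pi.smul_apply, smul_eq_mul] at *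
    linear_combination Real.sinh (σ u) ^ 2 * h1 + Real.cosh (σ u) ^ 2 * h3
      + v ^ 2 * κ u ^ 2 * h2 + 2 * Real.sinh (σ u) * Real.cosh (σ u) * h6
      + 2 * Real.sinh (σ u) * v * κ u * h4 + 2 * Real.cosh (σ u) * v * κ u * h5
  have hG : lg φv φv = 1 := h1
  have hK : K = κ u ^ 2 * Real.cosh (σ u) ^ 2
      / (Real.cosh (σ u) ^ 2 - v ^ 2 * κ u ^ 2) ^ 2 := by
    simp only [K]
    rw [hvv, hη, hE, hF, hG, huvc, hcc, mul_pow, inv_pow, Real.sq_sqrt (abs_nonneg _),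
      abs_of_pos hD]
    have e2 : (Real.sinh (σ u) ^ 2 - Real.cosh (σ u) ^ 2 + v ^ 2 * κ u ^ 2) * 1
        - Real.sinh (σ u) ^ 2 = -(Real.cosh (σ u) ^ 2 - v ^ 2 * κ u ^ 2) := by ring
    rw [e2]
    have hD' := hD.ne'
    generalize Real.cosh (σ u) ^ 2 - v ^ 2 * κ u ^ 2 = D at hD'
    field_simp
    ring
  refine ⟨hK, ?_⟩
  rw [hK]
  have e3 : (Real.cosh (σ u) / κ u) ^ 2 - v ^ 2
      = (Real.cosh (σ u) ^ 2 - v ^ 2 * κ u ^ 2) / κ u ^ 2 := by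
    field_simp
  rw [e3]
  have hD' := hD.ne'
  generalize Real.cosh (σ u) ^ 2 - v ^ 2 * κ u ^ 2 = D at hD'
  field_simp
end
end
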